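/- Let G be a finite digraph and let v and u be distinct vertices such that S_ρ(v) ∩ B_ρ(u) ≠ ∅ for some integer ρ ≥ 0. Then a (v,u)-trap exists, and the trap distance ρ*(v,u) is equal to the minimum value of ρ for which S_ρ(v) ∩ B_ρ(u) ≠ ∅. -/

import Mathlib

variable {V : Type*}

/-- `IsDiwalk G a b P` says that `P : Fin (m+1) → V` is a directed walk in the
digraph `G` from `a` to `b` (with `m` edges). -/
def IsDiwalk (G : V → V → Prop) (a b : V) {m : ℕ} (P : Fin (m + 1) → V) : Prop :=
  P 0 = a ∧ P (Fin.last m) = b ∧ ∀ i : Fin m, G (P i.castSucc) (P i.succ)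

/-- The distance `dist(a, b)` in a digraph: the length of a shortest directed
path from `a` to `b` (`⊤` if there is none). -/
noncomputable def ddist (G : V → V → Prop) (a b : V) : ℕ∞ :=
  sInf {n : ℕ∞ | ∃ (m : ℕ) (P : Fin (m + 1) → V), n = (m : ℕ∞) ∧ IsDiwalk G a b P}

/-- A `(v, u)`-trap in a digraph `G`: two internally disjoint geodesic directed
paths, a `(v, x)`-path `P` with at least one edge and a `(u, x)`-path `Q` with
`‖Q‖ ≤ ‖P‖`; if `u = v` both paths must have at least two edges.  The vertex
`x` is the tip and `‖P‖` is the length of the trap. -/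
structure Trap (G : V → V → Prop) (v u : V) where
  /-- the length of the trap, i.e. the number of edges of `P` -/
  lenP : ℕ
  /-- the number of edges of `Q` -/
  lenQ : ℕ
  /-- the tip of the trap -/
  x : V
  P : Fin (lenP + 1) → V
  Q : Fin (lenQ + 1) → V
  one_le_lenP : 1 ≤ lenP
  lenQ_le : lenQ ≤ lenP
  hPinj : Function.Injective P
  hQinj : Function.Injective Q
  hP : IsDiwalk G v x P
  hQ : IsDiwalk G u x Q
  hPgeo : ddist G v x = (lenP : ℕ∞)
  hQgeo : ddist G u x = (lenQ : ℕ∞)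
  disj : ∀ (i : Fin (lenP + 1)) (j : Fin (lenQ + 1)), P i = Q j →
    (i = 0 ∨ i = Fin.last lenP) ∧ (j = 0 ∨ j = Fin.last lenQ)
  eq_case : u = v → 2 ≤ lenP ∧ 2 ≤ lenQ

/-- The vertex set of a trap. -/
def Trap.verts {G : V → V → Prop} {v u : V} (T : Trap G v u) : Set V :=
  Set.range T.P ∪ Set.range T.Q

/-- The (directed) edge set of a trap. -/
def Trap.edges {G : V → V → Prop} {v u : V} (T : Trap G v u) : Set (V × V) :=
  (Set.range fun i : Fin T.lenP => (T.P i.castSucc, T.P i.succ)) ∪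
  (Set.range fun i : Fin T.lenQ => (T.Q i.castSucc, T.Q i.succ))

/-- Two `(v, u)`-traps are internally disjoint if they share no vertices apart
from `v` and `u`, and share no edges. -/
def Trap.InternallyDisjoint {G : V → V → Prop} {v u : V} (T₁ T₂ : Trap G v u) : Prop :=
  T₁.verts ∩ T₂.verts ⊆ {v, u} ∧ Disjoint T₁.edges T₂.edges

/-- The trap distance `ρ*(v, u)`: the minimum length of a `(v, u)`-trap
(`⊤` if there is none). -/
noncomputable def trapDist (G : V → V → Prop) (v u : V) : ℕ∞ :=
  sInf {n : ℕ∞ | ∃ T : Trap G v u, n = (T.lenP : ℕ∞)}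

/-- A digraph `G` is `t`-dispersed if (1) for all distinct vertices `v, u`
there are no two internally disjoint `(v, u)`-traps each of length at most `t`,
and (2) whenever `uv` is an edge of `G` there is no `(v, u)`-trap of length at
most `t`. -/
def Dispersed (G : V → V → Prop) (t : ℕ) : Prop :=
  (∀ v u : V, v ≠ u → ¬∃ T₁ T₂ : Trap G v u,
      T₁.lenP ≤ t ∧ T₂.lenP ≤ t ∧ T₁.InternallyDisjoint T₂) ∧
  (∀ u v : V, G u v → ¬∃ T : Trap G v u, T.lenP ≤ t)

/-- The sphere `S_ρ(v)`: vertices at directed distance exactly `ρ` from `v`. -/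
def dSphere (G : V → V → Prop) (v : V) (ρ : ℕ) : Set V :=
  {x | ddist G v x = (ρ : ℕ∞)}

/-- The ball `B_ρ(v)`: vertices at directed distance at most `ρ` from `v`. -/
def dBall (G : V → V → Prop) (v : V) (ρ : ℕ) : Set V :=
  {x | ddist G v x ≤ (ρ : ℕ∞)}

/-!
Let `P` and `Q` be geodesics from `v` and `u` to a common vertex `x`, with `‖Q‖ ≤ ‖P‖ = ρ`.
If `P i = Q j`, then going from `v` to `P i` along `P` and on to `x` along `Q` takes at least
`ρ = dist(v, x)` steps, so `ρ ≤ i + ‖Q‖ - j` and hence `j ≤ i`.  Thus `P i` lies in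
`S_i(v) ∩ B_i(u)`.  For the least `ρ` with `S_ρ(v) ∩ B_ρ(u) ≠ ∅` this forces `i = ρ`, so `P` and `Q`
meet only at `x` and form a trap.  Conversely, the tip of a trap of length `ρ` lies in
`S_ρ(v) ∩ B_ρ(u)`.
-/

section Distance

variable {G : V → V → Prop} {a b c : V} {m : ℕ}

theorem IsDiwalk.ddist_le {P : Fin (m + 1) → V} (hP : IsDiwalk G a b P) : ddist G a b ≤ m :=
  sInf_le ⟨m, P, rfl, hP⟩

theorem exists_isDiwalk_of_ddist_ne_top (h : ddist G a b ≠ ⊤) :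
    ∃ (m : ℕ) (P : Fin (m + 1) → V), ddist G a b = m ∧ IsDiwalk G a b P :=
  csInf_mem (Set.nonempty_iff_ne_empty.mpr fun hempty ↦
    h ((congrArg sInf hempty).trans sInf_empty))

theorem exists_isDiwalk_of_ddist_eq (h : ddist G a b = m) :
    ∃ P : Fin (m + 1) → V, IsDiwalk G a b P := by
  obtain ⟨k, P, hk, hP⟩ := exists_isDiwalk_of_ddist_ne_top (h ▸ ENat.natCast_ne_top m)
  obtain rfl : k = m := by exact_mod_cast hk.symm.trans h
  exact ⟨P, hP⟩

theorem ddist_eq_zero : ddist G a b = 0 ↔ a = b := by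
  constructor
  · intro h
    obtain ⟨P, hstart, hend, -⟩ := exists_isDiwalk_of_ddist_eq (m := 0) h
    exact hstart.symm.trans hend
  · rintro rfl
    have hconst : IsDiwalk G a a (fun _ : Fin (0 + 1) ↦ a) := ⟨rfl, rfl, Fin.elim0⟩
    exact le_zero_iff.mp hconst.ddist_le

theorem IsDiwalk.snoc {P : Fin (m + 1) → V} (hP : IsDiwalk G a b P) (hbc : G b c) :
    IsDiwalk G a c (Fin.snoc P c : Fin (m + 1 + 1) → V) := by
  obtain ⟨hstart, hend, hadj⟩ := hP
  refine ⟨?_, Fin.snoc_last (α := fun _ ↦ V) c P, fun i ↦ ?_⟩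
  · rw [← Fin.castSucc_zero, Fin.snoc_castSucc (α := fun _ ↦ V), hstart]
  · induction i using Fin.lastCases with
    | last => rwa [Fin.succ_last, Fin.snoc_last, Fin.snoc_castSucc (α := fun _ ↦ V), hend]
    | cast i =>
      rw [Fin.succ_castSucc, Fin.snoc_castSucc (α := fun _ ↦ V),
        Fin.snoc_castSucc (α := fun _ ↦ V)]
      exact hadj i

theorem ddist_le_ddist_add_one_of_adj (hbc : G b c) : ddist G a c ≤ ddist G a b + 1 := by
  by_cases htop : ddist G a b = ⊤
  · simp [htop]
  · obtain ⟨m, P, hm, hP⟩ := exists_isDiwalk_of_ddist_ne_top htop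
    rw [hm]
    exact_mod_cast (hP.snoc hbc).ddist_le

-- Moving both indices to the far sides avoids the truncated subtraction of `ℕ∞`.
theorem IsDiwalk.ddist_apply_add_le {P : Fin (m + 1) → V} (hP : IsDiwalk G a b P)
    (c : V) {i j : Fin (m + 1)} (hij : i ≤ j) :
    ddist G c (P j) + i.val ≤ ddist G c (P i) + j.val := by
  induction j using Fin.induction with
  | zero => rw [Fin.le_zero_iff.mp hij]
  | succ j ih =>
    obtain rfl | hlt := hij.eq_or_lt
    · rfl
    · calc ddist G c (P j.succ) + i.val
          ≤ ddist G c (P j.castSucc) + 1 + i.val := by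
            gcongr
            exact ddist_le_ddist_add_one_of_adj (hP.2.2 j)
        _ = ddist G c (P j.castSucc) + i.val + 1 := add_right_comm _ _ _
        _ ≤ ddist G c (P i) + j.val + 1 := by
            gcongr ?_ + 1
            exact ih (Fin.le_castSucc_iff.mpr hlt)
        _ = ddist G c (P i) + j.succ.val := by rw [add_assoc, Fin.val_succ, Nat.cast_add_one]

theorem IsDiwalk.ddist_apply_le {P : Fin (m + 1) → V} (hP : IsDiwalk G a b P)
    (i : Fin (m + 1)) : ddist G a (P i) ≤ i.val := by
  simpa [hP.1, ddist_eq_zero.mpr rfl] using hP.ddist_apply_add_le a (Fin.zero_le i)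

theorem IsDiwalk.ddist_last_add_le {P : Fin (m + 1) → V} (hP : IsDiwalk G a b P)
    (c : V) (i : Fin (m + 1)) : ddist G c b + i.val ≤ ddist G c (P i) + m := by
  simpa [hP.2.1] using hP.ddist_apply_add_le c (Fin.le_last i)

end Distance

section Geodesic

variable {G : V → V → Prop} {a b v u x : V} {m n : ℕ}

/-- A geodesic from `a` to `b`: a directed walk whose length is `dist(a, b)`.  The vertices are not
required to be distinct, since this follows (`IsGeodesic.injective`). -/
structure IsGeodesic (G : V → V → Prop) (a b : V) {m : ℕ} (P : Fin (m + 1) → V) : Prop where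
  isDiwalk : IsDiwalk G a b P
  ddist_eq : ddist G a b = m

theorem exists_isGeodesic_of_ddist_eq (h : ddist G a b = m) :
    ∃ P : Fin (m + 1) → V, IsGeodesic G a b P :=
  (exists_isDiwalk_of_ddist_eq h).imp fun _ hP ↦ ⟨hP, h⟩

theorem IsGeodesic.ddist_apply {P : Fin (m + 1) → V} (hP : IsGeodesic G a b P)
    (i : Fin (m + 1)) : ddist G a (P i) = i.val := by
  refine (hP.isDiwalk.ddist_apply_le i).antisymm ?_
  have h : (m + i.val : ℕ∞) ≤ ddist G a (P i) + m :=
    hP.ddist_eq ▸ hP.isDiwalk.ddist_last_add_le a i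
  rwa [add_comm, ENat.add_le_add_iff_right (ENat.natCast_ne_top m)] at h

theorem IsGeodesic.injective {P : Fin (m + 1) → V} (hP : IsGeodesic G a b P) :
    Function.Injective P := by
  intro i j hij
  have h : (i.val : ℕ∞) = j.val := by rw [← hP.ddist_apply, ← hP.ddist_apply, hij]
  exact Fin.ext (by exact_mod_cast h)

theorem IsGeodesic.apply_mem_dSphere_inter_dBall {P : Fin (m + 1) → V} {Q : Fin (n + 1) → V}
    (hP : IsGeodesic G v x P) (hQ : IsDiwalk G u x Q) (hnm : n ≤ m)
    {i : Fin (m + 1)} {j : Fin (n + 1)} (hij : P i = Q j) :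
    P i ∈ dSphere G v i ∩ dBall G u i := by
  have hji : j.val ≤ i.val := by
    have h := hQ.ddist_last_add_le v j
    rw [hP.ddist_eq, ← hij, hP.ddist_apply] at h
    have : m + j.val ≤ i.val + n := by exact_mod_cast h
    lia
  refine ⟨hP.ddist_apply i, ?_⟩
  calc ddist G u (P i) = ddist G u (Q j) := by rw [hij]
    _ ≤ j.val := hQ.ddist_apply_le j
    _ ≤ i.val := by exact_mod_cast hji

end Geodesic

section TrapDistance

variable {G : V → V → Prop} {v u : V} {ρ : ℕ}

theorem Trap.tip_mem_dSphere_inter_dBall (T : Trap G v u) :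
    T.x ∈ dSphere G v T.lenP ∩ dBall G u T.lenP :=
  ⟨T.hPgeo, T.hQgeo.trans_le (by exact_mod_cast T.lenQ_le)⟩

theorem pos_of_dSphere_inter_dBall_nonempty (hvu : v ≠ u)
    (h : (dSphere G v ρ ∩ dBall G u ρ).Nonempty) : 0 < ρ := by
  obtain ⟨x, hxv, hxu⟩ := h
  refine Nat.pos_of_ne_zero ?_
  rintro rfl
  have hv : v = x := ddist_eq_zero.mp hxv
  have hu : u = x := ddist_eq_zero.mp (le_zero_iff.mp hxu)
  exact hvu (hv.trans hu.symm)

theorem exists_trap_lenP_eq_of_isLeast (hvu : v ≠ u)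
    (hρ : IsLeast {k : ℕ | (dSphere G v k ∩ dBall G u k).Nonempty} ρ) :
    ∃ T : Trap G v u, T.lenP = ρ := by
  obtain ⟨x, hxv, hxu⟩ := hρ.1
  obtain ⟨n, hn, hnρ⟩ := ENat.le_natCast_iff.mp hxu
  obtain ⟨P, hP⟩ := exists_isGeodesic_of_ddist_eq hxv
  obtain ⟨Q, hQ⟩ := exists_isGeodesic_of_ddist_eq hn
  have meet_only_at_tip : ∀ i j, P i = Q j → i = Fin.last ρ ∧ j = Fin.last n := by
    intro i j hij
    have hρi : ρ ≤ i.val := hρ.2 ⟨P i, hP.apply_mem_dSphere_inter_dBall hQ.isDiwalk hnρ hij⟩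
    have hi : i = Fin.last ρ := Fin.last_le_iff.mp hρi
    refine ⟨hi, hQ.injective ?_⟩
    rw [← hij, hi, hP.isDiwalk.2.1, hQ.isDiwalk.2.1]
  exact ⟨{
    lenP := ρ
    lenQ := n
    x := x
    P := P
    Q := Q
    one_le_lenP := pos_of_dSphere_inter_dBall_nonempty hvu hρ.1
    lenQ_le := hnρ
    hPinj := hP.injective
    hQinj := hQ.injective
    hP := hP.isDiwalk
    hQ := hQ.isDiwalk
    hPgeo := hP.ddist_eq
    hQgeo := hQ.ddist_eq
    disj := fun i j hij ↦ (meet_only_at_tip i j hij).imp Or.inr Or.inr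
    eq_case := fun huv ↦ absurd huv.symm hvu }, rfl⟩

theorem exists_trap_lenP_le (hvu : v ≠ u) (h : (dSphere G v ρ ∩ dBall G u ρ).Nonempty) :
    ∃ T : Trap G v u, T.lenP ≤ ρ := by
  classical
  have hex : ∃ k, (dSphere G v k ∩ dBall G u k).Nonempty := ⟨ρ, h⟩
  obtain ⟨T, hT⟩ := exists_trap_lenP_eq_of_isLeast hvu (Nat.isLeast_find hex)
  exact ⟨T, hT.trans_le (Nat.find_min' hex h)⟩

end TrapDistance

theorem trapDist_eq_min_sphere_ball_general (G : V → V → Prop) (v u : V) (hvu : v ≠ u) :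
    (Nonempty (Trap G v u) ↔ ∃ ρ : ℕ, (dSphere G v ρ ∩ dBall G u ρ).Nonempty) ∧
      trapDist G v u =
        sInf {n : ℕ∞ | ∃ ρ : ℕ, n = (ρ : ℕ∞) ∧ (dSphere G v ρ ∩ dBall G u ρ).Nonempty} := by
  refine ⟨⟨?_, ?_⟩, le_antisymm (le_sInf ?_) (le_sInf ?_)⟩
  · rintro ⟨T⟩
    exact ⟨T.lenP, T.x, T.tip_mem_dSphere_inter_dBall⟩
  · rintro ⟨ρ, hρ⟩
    exact (exists_trap_lenP_le hvu hρ).nonempty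
  · rintro _ ⟨ρ, rfl, hρ⟩
    obtain ⟨T, hT⟩ := exists_trap_lenP_le hvu hρ
    exact sInf_le_of_le ⟨T, rfl⟩ (by exact_mod_cast hT)
  · rintro _ ⟨T, rfl⟩
    exact sInf_le ⟨T.lenP, rfl, T.x, T.tip_mem_dSphere_inter_dBall⟩

/-- Let `G` be a finite digraph and `v ≠ u` vertices with
`S_ρ(v) ∩ B_ρ(u) ≠ ∅` for some `ρ ≥ 0`.  Then a `(v, u)`-trap exists, and the
trap distance `ρ*(v, u)` equals the minimum `ρ` with `S_ρ(v) ∩ B_ρ(u) ≠ ∅`. -/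
theorem trapDist_eq_min_sphere_ball [Fintype V] (G : V → V → Prop)
    (v u : V) (hvu : v ≠ u)
    (h : ∃ ρ : ℕ, (dSphere G v ρ ∩ dBall G u ρ).Nonempty) :
    Nonempty (Trap G v u) ∧
      trapDist G v u =
        sInf {n : ℕ∞ | ∃ ρ : ℕ, n = (ρ : ℕ∞) ∧ (dSphere G v ρ ∩ dBall G u ρ).Nonempty} := by
  obtain ⟨trap_iff, trapDist_eq⟩ := trapDist_eq_min_sphere_ball_general G v u hvu
  exact ⟨trap_iff.mpr h, trapDist_eq⟩
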